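/- With high probability, sat(G(n,1/2), C_4) ≤ (27/14)·n·(1+o(1)). -/

import Mathlib

open MeasureTheory Filter Real

/-- The index type of potential edges of a graph on `Fin n`. -/
abbrev EdgeType (n : ℕ) := {e : Sym2 (Fin n) // ¬ e.IsDiag}

/-- The product Bernoulli measure on edge-indicator functions: the binomial
random graph `G(n,p)`. -/
noncomputable def erMeasure (n : ℕ) (p : ℝ) : Measure (EdgeType n → Bool) :=
  Measure.pi fun _ => (PMF.bernoulli (min (Real.toNNReal p) 1) (min_le_right _ _)).toMeasure

/-- The simple graph determined by an edge-indicator function. -/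
def graphOf {n : ℕ} (ω : EdgeType n → Bool) : SimpleGraph (Fin n) :=
  SimpleGraph.fromEdgeSet {e | ∃ h : ¬ e.IsDiag, ω ⟨e, h⟩ = true}

/-- `H` contains a (not necessarily induced) copy of `F`. -/
def ContainsCopy {α β : Type*} (F : SimpleGraph α) (H : SimpleGraph β) : Prop :=
  ∃ f : α → β, Function.Injective f ∧ ∀ ⦃a b⦄, F.Adj a b → H.Adj (f a) (f b)

/-- `H` is `F`-saturated in `G`: `H` is a spanning subgraph of `G` that is `F`-free,
and adding any edge of `G` missing from `H` creates a copy of `F`. -/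
def IsSaturatedIn {V : Type*} {α : Type*} (G H : SimpleGraph V) (F : SimpleGraph α) : Prop :=
  H ≤ G ∧ ¬ ContainsCopy F H ∧
    ∀ v w : V, G.Adj v w → ¬ H.Adj v w →
      ContainsCopy F (H ⊔ SimpleGraph.fromEdgeSet {s(v, w)})

/-- The saturation number `sat(G,F)`: the minimum number of edges of an
`F`-saturated spanning subgraph of `G`. -/
noncomputable def satNum {V α : Type*} (G : SimpleGraph V) (F : SimpleGraph α) : ℕ :=
  sInf {k | ∃ H : SimpleGraph V, IsSaturatedIn G H F ∧ H.edgeSet.ncard = k}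

/-- The cycle `C_m`, as a graph on `ZMod m`. -/
def cycGraph (m : ℕ) : SimpleGraph (ZMod m) :=
  SimpleGraph.fromRel (fun a b => a = b + 1)

/-!
Let `d < p`. Choose a vertex `a₀` and neighbours `a₁, a₂, …` of it with `a₁` adjacent to `a₂`, and
give a vertex rank `i` if `aᵢ` is its first neighbour in this sequence. Joining every vertex of rank
`i` to `aᵢ`, and `a₁` to `a₂`, produces a graph without four-cycles; let `H` be any saturated graph
containing it. Two vertices of rank `i` have the common neighbour `aᵢ` in `H`, so every other vertex
has at most one `H`-neighbour of rank `i`. Hence at most `n` edges of `H` have a lower end of rank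
`0`, about `n / 2` edges join vertices of equal rank, and at most `#{v | rank v > j}` edges have a
lower end of rank `j ≥ 1`. No edge joins rank `1` to rank `2`, since it would close a four-cycle
with `a₁` and `a₂`, so for `j = 1` even `#{v | rank v > 2}` suffices.

In the random graph the centres can be chosen so that each is adjacent to a proportion `d` of what
its predecessors have left over, because by Hoeffding's inequality no two large disjoint sets span
too few edges. Then `#{v | rank v ≥ i}` is about `(1 - d) ^ i * n`, and the number of edges is at
most about `(3 / 2 + (1 - d) ^ 3 + ∑ i ≥ 3, (1 - d) ^ i) * n`. For `d` close to `1 / 2` the constant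
is close to `15 / 8 < 27 / 14`.
-/

section Saturation

variable {V α : Type*} {F : SimpleGraph α} {G H H₀ : SimpleGraph V}

lemma satNum_le_ncard_edgeSet (h : IsSaturatedIn G H F) : satNum G F ≤ H.edgeSet.ncard :=
  Nat.sInf_le ⟨H, h, rfl⟩

lemma exists_isSaturatedIn_ge [Finite V] (hG : H₀ ≤ G) (hF : ¬ ContainsCopy F H₀) :
    ∃ H, H₀ ≤ H ∧ IsSaturatedIn G H F := by
  obtain ⟨H, hH₀, ⟨hHG, hHF⟩, hmax⟩ :=
    (Set.toFinite {H | H ≤ G ∧ ¬ ContainsCopy F H}).exists_le_maximal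
      (show H₀ ∈ _ from ⟨hG, hF⟩)
  refine ⟨H, hH₀, hHG, hHF, fun v w hvw hn => ?_⟩
  by_contra hcopy
  have hedge : SimpleGraph.fromEdgeSet {s(v, w)} ≤ G := by
    rw [SimpleGraph.fromEdgeSet_le]
    simpa [hvw.ne] using hvw
  refine hn (hmax ⟨sup_le hHG hedge, hcopy⟩ le_sup_left ?_)
  simp [hvw.ne]

end Saturation

section FourCycle

variable {V : Type*} {H : SimpleGraph V}

lemma containsCopy_cycGraph_four_iff :
    ContainsCopy (cycGraph 4) H ↔ ∃ v w x y, v ≠ w ∧ x ≠ y ∧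
      H.Adj v x ∧ H.Adj x w ∧ H.Adj w y ∧ H.Adj y v := by
  constructor
  · rintro ⟨f, hf, hadj⟩
    have hstep (a b : ZMod 4) (hab : a + 1 = b) : H.Adj (f a) (f b) := by
      refine hadj ((SimpleGraph.fromRel_adj _ _ _).2 ⟨?_, Or.inr hab.symm⟩)
      rintro rfl
      exact absurd hab (by decide +revert)
    exact ⟨f 0, f 2, f 1, f 3, hf.ne (by decide), hf.ne (by decide), hstep 0 1 rfl, hstep 1 2 rfl,
      hstep 2 3 rfl, hstep 3 0 rfl⟩
  · rintro ⟨v, w, x, y, hvw, hxy, hvx, hxw, hwy, hyv⟩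
    let f : Fin 4 → V := ![v, x, w, y]
    have hstep (a : Fin 4) : H.Adj (f a) (f (a + 1)) := by
      fin_cases a
      exacts [hvx, hxw, hwy, hyv]
    have hinj : Function.Injective f := by
      intro a b hab
      have := hvx.ne
      have := hxw.ne
      have := hwy.ne
      have := hyv.ne
      fin_cases a <;> fin_cases b <;> first | rfl | (simp_all [f, eq_comm])
    refine ⟨f, hinj, fun a b hab => ?_⟩
    obtain ⟨-, rfl | rfl⟩ := (SimpleGraph.fromRel_adj _ _ _).1 hab
    exacts [(hstep b).symm, hstep a]

lemma eq_of_adj_of_not_containsCopy (hH : ¬ ContainsCopy (cycGraph 4) H) {v w x y : V}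
    (hvw : v ≠ w) (hvx : H.Adj v x) (hwx : H.Adj w x) (hvy : H.Adj v y) (hwy : H.Adj w y) :
    x = y := by
  by_contra hxy
  exact hH (containsCopy_cycGraph_four_iff.2
    ⟨v, w, x, y, hvw, hxy, hvx, hwx.symm, hwy, hvy.symm⟩)

end FourCycle

section RankedPairs

variable {V : Type*} [Fintype V] (H : SimpleGraph V) (r : V → ℕ)

open scoped Classical in
/-- The edges of `H` joining a vertex of rank `j` to a vertex of higher rank, as pairs
`(higher vertex, lower vertex)`. -/
noncomputable def lowerPairs (j : ℕ) : Finset (V × V) :=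
  {p | H.Adj p.1 p.2 ∧ r p.2 = j ∧ j < r p.1}

open scoped Classical in
/-- The edges of `H` inside the rank classes of `r`, each counted once per orientation. -/
noncomputable def levelPairs : Finset (V × V) :=
  {p | H.Adj p.1 p.2 ∧ r p.1 = r p.2}

variable {H r}

@[simp]
lemma mem_lowerPairs {j : ℕ} {v w : V} :
    (v, w) ∈ lowerPairs H r j ↔ H.Adj v w ∧ r w = j ∧ j < r v := by
  simp [lowerPairs]

@[simp]
lemma mem_levelPairs {v w : V} : (v, w) ∈ levelPairs H r ↔ H.Adj v w ∧ r v = r w := by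
  simp [levelPairs]

lemma two_mul_ncard_edgeSet_eq {m : ℕ} (hr : ∀ v, r v ≤ m) :
    2 * H.edgeSet.ncard =
      2 * ∑ j ∈ Finset.range m, (lowerPairs H r j).card + (levelPairs H r).card := by
  classical
  let down : Finset (V × V) := {p | H.Adj p.1 p.2 ∧ r p.2 < r p.1}
  let up : Finset (V × V) := {p | H.Adj p.1 p.2 ∧ r p.1 < r p.2}
  have hpairs : 2 * H.edgeSet.ncard = ({p | H.Adj p.1 p.2} : Finset (V × V)).card := by
    rw [← H.coe_edgeFinset, Set.ncard_coe_finset, ← H.sum_degrees_eq_twice_card_edges,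
      Finset.card_filter, Fintype.sum_prod_type]
    simp [← SimpleGraph.card_neighborFinset_eq_degree, SimpleGraph.neighborFinset_eq_filter]
  have hsplit : ({p | H.Adj p.1 p.2} : Finset (V × V)).card =
      down.card + up.card + (levelPairs H r).card := by
    rw [← Finset.card_union_of_disjoint, ← Finset.card_union_of_disjoint]
    · congr 1
      ext ⟨v, w⟩
      simp only [down, up, Finset.mem_union, Finset.mem_filter_univ, mem_levelPairs]
      grind
    all_goals
      rw [Finset.disjoint_left]
      rintro ⟨v, w⟩
      simp only [down, up, Finset.mem_union, Finset.mem_filter_univ, mem_levelPairs]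
      grind
  have hup : up.card = down.card :=
    Finset.card_equiv (Equiv.prodComm V V) (by simp [up, down, SimpleGraph.adj_comm])
  have hdown : down.card = ∑ j ∈ Finset.range m, (lowerPairs H r j).card := by
    rw [Finset.card_eq_sum_card_fiberwise (f := fun p => r p.2) (t := Finset.range m)]
    · refine Finset.sum_congr rfl fun j _ => congrArg Finset.card ?_
      ext ⟨v, w⟩
      simp only [down, Finset.mem_filter, Finset.mem_univ, true_and, mem_lowerPairs]
      grind
    · rintro ⟨v, w⟩ hvw
      have := hr v
      simp only [down, Finset.mem_coe, Finset.mem_filter_univ, Finset.mem_range] at hvw ⊢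
      omega
  omega

end RankedPairs

/-- The combinatorial data of the starting graph: a vertex of rank `i < height` is to be joined to
`centre i`. The centre of the top rank class is `centre 0`, all other centres have rank `0`, and
vertices of rank `height` remain unassigned. -/
structure StarSystem (V : Type*) where
  /-- The number of rank classes with a centre. -/
  height : ℕ
  /-- The centres of the stars; only the first `height` of them are used. -/
  centre : ℕ → V
  /-- The index of the star containing a vertex, or `height` if there is none. -/
  rank : V → ℕ
  three_le_height : 3 ≤ height
  rank_le (v : V) : rank v ≤ height
  rank_centre_zero : rank (centre 0) = height
  rank_centre_succ (k : ℕ) : rank (centre (k + 1)) = 0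
  centre_one_ne_centre_two : centre 1 ≠ centre 2

namespace StarSystem

section Graph

variable {V : Type*} (S : StarSystem V)

/-- The starting graph of a star system: its stars, together with the edge between the centres of
ranks `1` and `2`, which keeps a saturated graph from joining the classes of rank `1` and `2`. -/
def graph : SimpleGraph V :=
  SimpleGraph.fromRel fun v w =>
    (S.rank v < S.height ∧ w = S.centre (S.rank v)) ∨ (v = S.centre 1 ∧ w = S.centre 2)

variable {S} {v w x : V}

lemma rank_centre_of_ne_zero {k : ℕ} (hk : k ≠ 0) : S.rank (S.centre k) = 0 := by
  obtain ⟨k, rfl⟩ := Nat.exists_eq_succ_of_ne_zero hk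
  exact S.rank_centre_succ k

lemma ne_centre_rank (hv : S.rank v < S.height) : v ≠ S.centre (S.rank v) := by
  intro h
  by_cases hzero : S.rank v = 0
  · have := S.rank_centre_zero
    grind
  · exact hzero (h ▸ rank_centre_of_ne_zero hzero)

lemma graph_adj_centre_rank (hv : S.rank v < S.height) : S.graph.Adj v (S.centre (S.rank v)) :=
  (SimpleGraph.fromRel_adj _ _ _).2 ⟨ne_centre_rank hv, Or.inl (Or.inl ⟨hv, rfl⟩)⟩

variable (S) in
lemma graph_adj_centre_one_centre_two : S.graph.Adj (S.centre 1) (S.centre 2) :=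
  (SimpleGraph.fromRel_adj _ _ _).2 ⟨S.centre_one_ne_centre_two, Or.inl (Or.inr ⟨rfl, rfl⟩)⟩

lemma eq_centre_rank_of_graph_adj (hv : ∀ k, v ≠ S.centre k) (h : S.graph.Adj v w) :
    w = S.centre (S.rank v) := by
  have := (SimpleGraph.fromRel_adj _ _ _).1 h
  grind

lemma eq_centre_zero_or_rank_eq_zero (hwx : w ≠ x) (hw : S.graph.Adj v w) (hx : S.graph.Adj v x) :
    v = S.centre 0 ∨ S.rank v = 0 := by
  by_cases hv : ∃ k, v = S.centre k
  · obtain ⟨k | k, rfl⟩ := hv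
    exacts [Or.inl rfl, Or.inr (S.rank_centre_succ k)]
  · push Not at hv
    have hw' := eq_centre_rank_of_graph_adj hv hw
    have hx' := eq_centre_rank_of_graph_adj hv hx
    exact absurd (hw'.trans hx'.symm) hwx

lemma eq_of_graph_adj_of_rank_eq_zero (hv : S.rank v = 0) (hw : S.rank w = 0) (hx : S.rank x = 0)
    (hvx : S.graph.Adj v x) (hwx : S.graph.Adj w x) : v = w := by
  have := (SimpleGraph.fromRel_adj _ _ _).1 hvx
  have := (SimpleGraph.fromRel_adj _ _ _).1 hwx
  have := S.rank_centre_zero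
  have := S.three_le_height
  grind

/-- Every vertex of a four-cycle in `S.graph` is `S.centre 0` or has rank `0`, so three consecutive
ones have rank `0`, while the only edge between vertices of rank `0` is the one joining `S.centre 1`
and `S.centre 2`. -/
lemma not_containsCopy_graph : ¬ ContainsCopy (cycGraph 4) S.graph := by
  rw [containsCopy_cycGraph_four_iff]
  rintro ⟨v, w, x, y, hvw, hxy, hvx, hxw, hwy, hyv⟩
  have hv := eq_centre_zero_or_rank_eq_zero hxy hvx hyv.symm
  have hw := eq_centre_zero_or_rank_eq_zero hxy hxw.symm hwy
  have hx := eq_centre_zero_or_rank_eq_zero hvw hvx.symm hxw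
  have hy := eq_centre_zero_or_rank_eq_zero hvw hyv hwy.symm
  have hvwx := eq_of_graph_adj_of_rank_eq_zero (v := v) (w := w) (x := x) (S := S)
  have hvwy := eq_of_graph_adj_of_rank_eq_zero (v := v) (w := w) (x := y) (S := S)
  have hxyv := eq_of_graph_adj_of_rank_eq_zero (v := x) (w := y) (x := v) (S := S)
  have hxyw := eq_of_graph_adj_of_rank_eq_zero (v := x) (w := y) (x := w) (S := S)
  have := hvx.ne
  have := hxw.ne
  have := hwy.ne
  have := hyv.ne
  grind [SimpleGraph.adj_comm]

end Graph

section EdgeCount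

variable {V : Type*} {S : StarSystem V} {H : SimpleGraph V} {v w x : V}

lemma eq_of_adj_of_rank_eq (hH : ¬ ContainsCopy (cycGraph 4) H) (hS : S.graph ≤ H)
    (hv : v ≠ S.centre (S.rank w)) (hw : S.rank w < S.height) (hwx : S.rank w = S.rank x)
    (hvw : H.Adj v w) (hvx : H.Adj v x) : w = x :=
  eq_of_adj_of_not_containsCopy hH hv hvw (hS (graph_adj_centre_rank hw)).symm hvx
    (hwx ▸ hS (graph_adj_centre_rank (hwx ▸ hw))).symm

/-- Such an edge would close a four-cycle through `S.centre 1` and `S.centre 2`. -/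
lemma not_adj_of_rank_eq_two_of_rank_eq_one (hH : ¬ ContainsCopy (cycGraph 4) H)
    (hS : S.graph ≤ H) (hv : S.rank v = 2) (hw : S.rank w = 1) : ¬ H.Adj v w := by
  intro hvw
  have hheight := S.three_le_height
  have hv' : H.Adj v (S.centre 2) := hv ▸ hS (graph_adj_centre_rank (by omega))
  have hw' : H.Adj w (S.centre 1) := hw ▸ hS (graph_adj_centre_rank (by omega))
  refine hH (containsCopy_cycGraph_four_iff.2 ⟨v, S.centre 1, S.centre 2, w, ?_, ?_, hv',
    (hS S.graph_adj_centre_one_centre_two).symm, hw'.symm, hvw.symm⟩)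
  · rintro rfl
    simp [S.rank_centre_succ 0] at hv
  · rintro rfl
    simp [S.rank_centre_succ 1] at hw

variable [Fintype V]

variable (S) in
/-- The vertices of rank at least `i`. -/
def upper (i : ℕ) : Finset V := {v | i ≤ S.rank v}

@[simp]
lemma mem_upper {i : ℕ} : v ∈ S.upper i ↔ i ≤ S.rank v := by
  simp [upper]

/-- Each pair is charged to its upper vertex, except that the pairs at `S.centre 0` are charged to
their lower vertex. -/
lemma card_lowerPairs_zero_le (hH : ¬ ContainsCopy (cycGraph 4) H) (hS : S.graph ≤ H) :
    (lowerPairs H S.rank 0).card ≤ Fintype.card V := by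
  classical
  have hheight := S.three_le_height
  refine Finset.card_le_card_of_injOn (t := Finset.univ)
    (fun p => if p.1 = S.centre 0 then p.2 else p.1) (fun _ _ => Finset.mem_univ _) ?_
  rintro ⟨v, w⟩ hvw ⟨v', w'⟩ hvw' heq
  simp only [Finset.mem_coe, mem_lowerPairs] at hvw hvw' heq
  split_ifs at heq with hv hv' hv'
  · grind
  · grind
  · grind
  · subst heq
    rw [eq_of_adj_of_rank_eq hH hS (by grind) (by omega) (by omega) hvw.1 hvw'.1]

lemma injOn_fst_lowerPairs (hH : ¬ ContainsCopy (cycGraph 4) H) (hS : S.graph ≤ H) {j : ℕ}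
    (hj : j ≠ 0) : Set.InjOn Prod.fst (lowerPairs H S.rank j : Set (V × V)) := by
  rintro ⟨v, w⟩ hvw ⟨v', w'⟩ hvw' rfl
  simp only [Finset.mem_coe, mem_lowerPairs] at hvw hvw'
  have hheight := S.rank_le v
  have hv : v ≠ S.centre j := by
    rintro rfl
    simp [rank_centre_of_ne_zero hj] at hvw
  rw [eq_of_adj_of_rank_eq hH hS (by grind) (by omega) (by omega) hvw.1 hvw'.1]

lemma card_lowerPairs_le (hH : ¬ ContainsCopy (cycGraph 4) H) (hS : S.graph ≤ H) {j : ℕ}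
    (hj : j ≠ 0) : (lowerPairs H S.rank j).card ≤ (S.upper (j + 1)).card := by
  refine Finset.card_le_card_of_injOn Prod.fst ?_ (injOn_fst_lowerPairs hH hS hj)
  rintro ⟨v, w⟩ hvw
  simp only [Finset.mem_coe, mem_lowerPairs, mem_upper] at hvw ⊢
  omega

lemma card_lowerPairs_one_le (hH : ¬ ContainsCopy (cycGraph 4) H) (hS : S.graph ≤ H) :
    (lowerPairs H S.rank 1).card ≤ (S.upper 3).card := by
  refine Finset.card_le_card_of_injOn Prod.fst ?_ (injOn_fst_lowerPairs hH hS one_ne_zero)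
  rintro ⟨v, w⟩ hvw
  simp only [Finset.mem_coe, mem_lowerPairs, mem_upper] at hvw ⊢
  by_contra hv
  exact not_adj_of_rank_eq_two_of_rank_eq_one hH hS (by omega) hvw.2.1 hvw.1

lemma card_levelPairs_le (hH : ¬ ContainsCopy (cycGraph 4) H) (hS : S.graph ≤ H) :
    (levelPairs H S.rank).card ≤ Fintype.card V + (S.upper S.height).card ^ 2 := by
  classical
  set below := (levelPairs H S.rank).filter fun p => S.rank p.1 < S.height
  have hbelow : below.card ≤ Fintype.card V := by
    refine Finset.card_le_card_of_injOn (t := Finset.univ) Prod.fst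
      (fun _ _ => Finset.mem_univ _) ?_
    rintro ⟨v, w⟩ hvw ⟨v', w'⟩ hvw' rfl
    simp only [below, Finset.mem_coe, Finset.mem_filter, mem_levelPairs] at hvw hvw'
    have hv := ne_centre_rank hvw.2
    rw [eq_of_adj_of_rank_eq hH hS (by grind) (by omega) (by omega) hvw.1.1 hvw'.1.1]
  have hcover : levelPairs H S.rank ⊆ below ∪ S.upper S.height ×ˢ S.upper S.height := by
    rintro ⟨v, w⟩ hvw
    simp only [below, Finset.mem_union, Finset.mem_filter, Finset.mem_product, mem_upper,
      mem_levelPairs] at hvw ⊢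
    grind
  calc (levelPairs H S.rank).card
      ≤ below.card + (S.upper S.height ×ˢ S.upper S.height).card :=
        (Finset.card_le_card hcover).trans (Finset.card_union_le _ _)
    _ ≤ Fintype.card V + (S.upper S.height).card ^ 2 := by
        rw [Finset.card_product, sq]
        gcongr

lemma sum_card_lowerPairs_le (hH : ¬ ContainsCopy (cycGraph 4) H) (hS : S.graph ≤ H) :
    ∑ j ∈ Finset.range S.height, (lowerPairs H S.rank j).card ≤
      Fintype.card V + (S.upper 3).card + ∑ i ∈ Finset.Ico 3 (S.height + 1), (S.upper i).card := by
  have hheight := S.three_le_height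
  have htail : ∑ j ∈ Finset.Ico 2 S.height, (lowerPairs H S.rank j).card ≤
      ∑ i ∈ Finset.Ico 3 (S.height + 1), (S.upper i).card := by
    rw [← Finset.sum_Ico_add' (fun i => (S.upper i).card) 2 S.height 1]
    refine Finset.sum_le_sum fun j hj => card_lowerPairs_le hH hS ?_
    have := (Finset.mem_Ico.1 hj).1
    omega
  rw [← Finset.sum_range_add_sum_Ico _ (show 2 ≤ S.height by omega), Finset.sum_range_succ,
    Finset.sum_range_one]
  gcongr
  exacts [card_lowerPairs_zero_le hH hS, card_lowerPairs_one_le hH hS]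

theorem two_mul_ncard_edgeSet_le (hH : ¬ ContainsCopy (cycGraph 4) H) (hS : S.graph ≤ H) :
    2 * H.edgeSet.ncard ≤
      2 * (Fintype.card V + (S.upper 3).card +
        ∑ i ∈ Finset.Ico 3 (S.height + 1), (S.upper i).card) +
      (Fintype.card V + (S.upper S.height).card ^ 2) := by
  rw [two_mul_ncard_edgeSet_eq S.rank_le]
  gcongr
  exacts [sum_card_lowerPairs_le hH hS, card_levelPairs_le hH hS]

theorem ncard_edgeSet_le_of_card_upper_le (hH : ¬ ContainsCopy (cycGraph 4) H) (hS : S.graph ≤ H)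
    {q M : ℝ} (hq₀ : 0 ≤ q) (hq₁ : q < 1) (hM : 0 ≤ M)
    (hupper : ∀ i, ((S.upper i).card : ℝ) ≤ q ^ i * Fintype.card V + M) :
    (H.edgeSet.ncard : ℝ) ≤ (3 / 2 + q ^ 3 * (1 + 1 / (1 - q))) * Fintype.card V + S.height * M +
      (q ^ S.height * Fintype.card V + M) ^ 2 := by
  have hcount : 2 * (H.edgeSet.ncard : ℝ) ≤
      2 * (Fintype.card V + (S.upper 3).card +
        ∑ i ∈ Finset.Ico 3 (S.height + 1), ((S.upper i).card : ℝ)) +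
      (Fintype.card V + ((S.upper S.height).card : ℝ) ^ 2) :=
    mod_cast two_mul_ncard_edgeSet_le hH hS
  set n := (Fintype.card V : ℝ)
  have hsum : ∑ i ∈ Finset.Ico 3 (S.height + 1), ((S.upper i).card : ℝ) ≤
      q ^ 3 / (1 - q) * n + (S.height - 2) * M :=
    calc ∑ i ∈ Finset.Ico 3 (S.height + 1), ((S.upper i).card : ℝ)
        ≤ ∑ i ∈ Finset.Ico 3 (S.height + 1), (q ^ i * n + M) :=
          Finset.sum_le_sum fun i _ => hupper i
      _ = (∑ i ∈ Finset.Ico 3 (S.height + 1), q ^ i) * n + (S.height - 2) * M := by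
          rw [Finset.sum_add_distrib, Finset.sum_mul, Finset.sum_const, Nat.card_Ico, nsmul_eq_mul,
            Nat.cast_sub (by have := S.three_le_height; omega)]
          push_cast
          ring
      _ ≤ q ^ 3 / (1 - q) * n + (S.height - 2) * M := by
          gcongr
          exact geom_sum_Ico_le_of_lt_one hq₀ hq₁
  have htop : ((S.upper S.height).card : ℝ) ^ 2 ≤ (q ^ S.height * n + M) ^ 2 := by
    gcongr
    exact hupper _
  have hthree := hupper 3
  have hsq := sq_nonneg (q ^ S.height * n + M)
  have hconst : q ^ 3 * (1 + 1 / (1 - q)) = q ^ 3 + q ^ 3 / (1 - q) := by ring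
  rw [hconst]
  linarith

end EdgeCount

end StarSystem

section Centres

variable {V : Type*} {G : SimpleGraph V} {a : ℕ → V}

open scoped Classical in
/-- The star system in which every vertex other than `a 0` is assigned to the first of its
neighbours among `a 0, …, a (m - 1)`, while `a 0` itself stays unassigned. -/
noncomputable def StarSystem.ofCentres (G : SimpleGraph V) (a : ℕ → V) {m : ℕ} (hm : 3 ≤ m)
    (hadj : ∀ k, G.Adj (a 0) (a (k + 1))) (hadj₁₂ : G.Adj (a 1) (a 2)) : StarSystem V where
  height := m
  centre := a
  rank v := if v = a 0 then m else sInf (insert m {i | G.Adj (a i) v})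
  three_le_height := hm
  rank_le v := by
    split_ifs
    exacts [le_rfl, Nat.sInf_le (Set.mem_insert _ _)]
  rank_centre_zero := if_pos rfl
  rank_centre_succ k := by
    rw [if_neg (hadj k).ne', Nat.sInf_eq_zero]
    exact Or.inl (Set.mem_insert_of_mem _ (hadj k))
  centre_one_ne_centre_two := hadj₁₂.ne

section OfCentres

variable {m : ℕ} {hm : 3 ≤ m} {hadj : ∀ k, G.Adj (a 0) (a (k + 1))} {hadj₁₂ : G.Adj (a 1) (a 2)}

lemma StarSystem.adj_of_rank_ofCentres_lt {v : V} (hv : (ofCentres G a hm hadj hadj₁₂).rank v < m) :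
    G.Adj (a ((ofCentres G a hm hadj hadj₁₂).rank v)) v := by
  have hmem := Nat.sInf_mem (Set.insert_nonempty m {i | G.Adj (a i) v})
  simp only [ofCentres] at hv ⊢
  split_ifs at hv ⊢
  · exact absurd hv (lt_irrefl _)
  · exact hmem.resolve_left hv.ne

lemma StarSystem.graph_ofCentres_le : (ofCentres G a hm hadj hadj₁₂).graph ≤ G := by
  have horient {v w : V} (h : ((ofCentres G a hm hadj hadj₁₂).rank v < m ∧
      w = a ((ofCentres G a hm hadj hadj₁₂).rank v)) ∨ (v = a 1 ∧ w = a 2)) : G.Adj v w := by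
    obtain ⟨hv, rfl⟩ | ⟨rfl, rfl⟩ := h
    exacts [(adj_of_rank_ofCentres_lt hv).symm, hadj₁₂]
  intro v w hvw
  obtain ⟨-, h | h⟩ := (SimpleGraph.fromRel_adj _ _ _).1 hvw
  exacts [horient h, (horient h).symm]

end OfCentres

open scoped Classical in
/-- The vertices of `S` adjacent to `x`. -/
noncomputable def nbrsIn (G : SimpleGraph V) (x : V) (S : Finset V) : Finset V :=
  {v ∈ S | G.Adj x v}

lemma mem_nbrsIn {x v : V} {S : Finset V} : v ∈ nbrsIn G x S ↔ v ∈ S ∧ G.Adj x v := by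
  simp [nbrsIn]

lemma nbrsIn_subset (x : V) (S : Finset V) : nbrsIn G x S ⊆ S := fun _ hv => (mem_nbrsIn.1 hv).1

/-- The vertex `x` is adjacent to a proportion at least `d` of `S`, unless `S` has fewer than `L`
elements. -/
def SeesShare (G : SimpleGraph V) (d L : ℝ) (x : V) (S : Finset V) : Prop :=
  L ≤ S.card → d * S.card ≤ (nbrsIn G x S).card

open scoped Classical in
lemma SeesShare.card_sdiff_nbrsIn_le {d L b : ℝ} {x : V} {S : Finset V}
    (h : SeesShare G d L x S) (hd₀ : 0 ≤ d) (hd₁ : d ≤ 1) (hL : 0 ≤ L) (hb : 0 ≤ b)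
    (hS : (S.card : ℝ) ≤ b + L) :
    ((S \ nbrsIn G x S).card : ℝ) ≤ (1 - d) * b + L := by
  have hcard : ((S \ nbrsIn G x S).card : ℝ) = S.card - (nbrsIn G x S).card := by
    rw [Finset.card_sdiff_of_subset (nbrsIn_subset x S),
      Nat.cast_sub (Finset.card_le_card (nbrsIn_subset x S))]
  have hd' : 0 ≤ 1 - d := by linarith
  rw [hcard]
  obtain hLS | hSL := le_or_gt L S.card
  · have := h hLS
    nlinarith [mul_nonneg hd₀ hL, mul_le_mul_of_nonneg_left hS hd']
  · have := Nat.cast_nonneg (α := ℝ) (nbrsIn G x S).card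
    nlinarith [mul_nonneg hd' hb]

variable [Fintype V]

open scoped Classical in
/-- The vertices adjacent to none of the first `k` terms of the sequence `a`. -/
noncomputable def unseen (G : SimpleGraph V) (a : ℕ → V) (k : ℕ) : Finset V :=
  {v | ∀ i < k, ¬ G.Adj (a i) v}

lemma mem_unseen {k : ℕ} {v : V} : v ∈ unseen G a k ↔ ∀ i < k, ¬ G.Adj (a i) v := by
  simp [unseen]

variable (G a) in
lemma unseen_zero : unseen G a 0 = Finset.univ := by
  ext
  simp [mem_unseen]

lemma card_upper_ofCentres_le {m : ℕ} (hm : 3 ≤ m) (hadj : ∀ k, G.Adj (a 0) (a (k + 1)))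
    (hadj₁₂ : G.Adj (a 1) (a 2)) (i : ℕ) :
    ((StarSystem.ofCentres G a hm hadj hadj₁₂).upper i).card ≤ (unseen G a i).card + 1 := by
  classical
  refine (Finset.card_le_card ?_).trans (Finset.card_insert_le (a 0) _)
  intro v hv
  rw [StarSystem.mem_upper] at hv
  simp only [StarSystem.ofCentres] at hv
  split_ifs at hv with hv₀
  · exact Finset.mem_insert.2 (Or.inl hv₀)
  · refine Finset.mem_insert_of_mem (mem_unseen.2 fun j hj hadj => ?_)
    exact (hv.trans (Nat.sInf_le (Set.mem_insert_of_mem m hadj))).not_gt hj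

/-- A one-sided uniformity condition: whenever `X` and `U` are disjoint and `X × U` has at least `K`
times as many elements as there are vertices, some vertex of `X` is adjacent to a proportion at
least `d` of `U`. -/
def IsLowerUniform (G : SimpleGraph V) (d K : ℝ) : Prop :=
  ∀ X U : Finset V, Disjoint X U → K * Fintype.card V ≤ X.card * U.card →
    ∃ x ∈ X, d * U.card ≤ (nbrsIn G x U).card

variable {d K L β : ℝ} {A S T X : Finset V}

open scoped Classical in
lemma card_filter_not_seesShare_lt (hG : IsLowerUniform G d K) (hXS : Disjoint X S)
    (hβ : 0 < β * Fintype.card V) (hβL : K ≤ β * L) :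
    ((X.filter fun x => ¬ SeesShare G d L x S).card : ℝ) < β * Fintype.card V := by
  set bad := X.filter fun x => ¬ SeesShare G d L x S
  by_contra! hbad
  obtain ⟨y, hy⟩ : bad.Nonempty := Finset.card_pos.1 (mod_cast hβ.trans_le hbad)
  have hS : L ≤ S.card := (Classical.not_imp.1 (Finset.mem_filter.1 hy).2).1
  have hlarge : K * Fintype.card V ≤ bad.card * S.card :=
    calc K * Fintype.card V ≤ β * L * Fintype.card V := by gcongr
      _ = β * Fintype.card V * L := by ring
      _ ≤ β * Fintype.card V * S.card := by gcongr
      _ ≤ bad.card * S.card := by gcongr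
  obtain ⟨x, hx, hshare⟩ := hG bad S (hXS.mono_left (Finset.filter_subset _ _)) hlarge
  exact (Finset.mem_filter.1 hx).2 fun _ => hshare

lemma exists_seesShare_and_seesShare (hG : IsLowerUniform G d K) (hXS : Disjoint X S)
    (hXT : Disjoint X T) (hβ : 0 < β * Fintype.card V) (hβL : K ≤ β * L)
    (hX : 2 * β * Fintype.card V ≤ X.card) :
    ∃ x ∈ X, SeesShare G d L x S ∧ SeesShare G d L x T := by
  classical
  by_contra! hbad
  have hcover : X ⊆ (X.filter fun x => ¬ SeesShare G d L x S) ∪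
      X.filter fun x => ¬ SeesShare G d L x T := by
    intro x hx
    simp only [Finset.mem_union, Finset.mem_filter]
    have := hbad x hx
    tauto
  have hcard := (Finset.card_le_card hcover).trans (Finset.card_union_le _ _)
  have hcard' : (X.card : ℝ) ≤ (X.filter fun x => ¬ SeesShare G d L x S).card +
      (X.filter fun x => ¬ SeesShare G d L x T).card := mod_cast hcard
  have hbadS := card_filter_not_seesShare_lt hG hXS hβ hβL
  have hbadT := card_filter_not_seesShare_lt hG hXT hβ hβL
  linarith

lemma exists_le_card_nbrsIn_univ (hG : IsLowerUniform G d K) (hd : 0 ≤ d) (hK : 1 ≤ K)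
    (hn : 6 * K ≤ Fintype.card V) :
    ∃ x, d * (Fintype.card V - 3 * K) ≤ (nbrsIn G x Finset.univ).card := by
  classical
  have hceil : (⌈2 * K⌉₊ : ℝ) ≤ 3 * K := by
    have := Nat.ceil_lt_add_one (show 0 ≤ 2 * K by linarith)
    linarith
  obtain ⟨X, -, hX⟩ := Finset.exists_subset_card_eq (s := (Finset.univ : Finset V))
    (n := ⌈2 * K⌉₊) (mod_cast hceil.trans (show 3 * K ≤ Fintype.card V by linarith))
  have hXcard : 2 * K ≤ X.card := hX ▸ Nat.le_ceil _
  have hXcompl : Fintype.card V - 3 * K ≤ (Xᶜ.card : ℝ) := by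
    rw [Finset.card_compl, Nat.cast_sub (Finset.card_le_univ X), hX]
    linarith
  have hlarge : K * Fintype.card V ≤ X.card * Xᶜ.card :=
    calc K * Fintype.card V = 2 * K * (Fintype.card V / 2) := by ring
      _ ≤ X.card * Xᶜ.card := by
        gcongr
        linarith
  obtain ⟨x, -, hx⟩ := hG X Xᶜ disjoint_compl_right hlarge
  refine ⟨x, (mul_le_mul_of_nonneg_left hXcompl hd).trans (hx.trans ?_)⟩
  exact_mod_cast Finset.card_le_card fun v hv =>
    mem_nbrsIn.2 ⟨Finset.mem_univ v, (mem_nbrsIn.1 hv).2⟩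

open scoped Classical in
lemma exists_adj_seesShare (hG : IsLowerUniform G d K) (hd : d ≤ 1) (hAS : Disjoint A S)
    (hβ : 0 < β * Fintype.card V) (hβL : K ≤ β * L)
    (hA : 4 * β * Fintype.card V + 1 ≤ d * A.card) (hAL : 2 * L ≤ A.card) :
    ∃ x ∈ A, ∃ y ∈ A, G.Adj x y ∧ SeesShare G d L x S ∧ SeesShare G d L y (S \ nbrsIn G x S) := by
  obtain ⟨B, hBA, hB⟩ := Finset.exists_subset_card_eq (Nat.div_le_self A.card 2)
  have hBC : B.card + (A \ B).card = A.card := by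
    rw [Finset.card_sdiff_of_subset hBA, Nat.add_sub_cancel' (Finset.card_le_card hBA)]
  have hBcard : ((A.card : ℝ) - 1) / 2 ≤ B.card := by
    have : A.card ≤ 2 * B.card + 1 := by omega
    have : (A.card : ℝ) ≤ 2 * B.card + 1 := mod_cast this
    linarith
  have hCcard : (A.card : ℝ) / 2 ≤ (A \ B).card := by
    have : A.card ≤ 2 * (A \ B).card := by omega
    have : (A.card : ℝ) ≤ 2 * (A \ B).card := mod_cast this
    linarith
  have hdA : d * A.card ≤ A.card := mul_le_of_le_one_left (Nat.cast_nonneg _) hd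
  obtain ⟨x, hxB, hxS, hxC⟩ := exists_seesShare_and_seesShare hG (hAS.mono_left hBA)
    Finset.disjoint_sdiff hβ hβL (show 2 * β * Fintype.card V ≤ B.card by linarith)
  have hN : 2 * β * Fintype.card V ≤ (nbrsIn G x (A \ B)).card := by
    have := hxC (by linarith)
    have hd₀ : 0 ≤ d := by
      by_contra! hd₀
      have := mul_nonpos_of_nonpos_of_nonneg hd₀.le (Nat.cast_nonneg (α := ℝ) A.card)
      linarith
    have := mul_le_mul_of_nonneg_left hCcard hd₀
    linarith
  have hNA : nbrsIn G x (A \ B) ⊆ A := (nbrsIn_subset _ _).trans Finset.sdiff_subset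
  have hNS : Disjoint (nbrsIn G x (A \ B)) (S \ nbrsIn G x S) :=
    (hAS.mono_left hNA).mono_right Finset.sdiff_subset
  obtain ⟨y, hyN, hyS, -⟩ := exists_seesShare_and_seesShare hG hNS hNS hβ hβL hN
  exact ⟨x, hBA hxB, y, hNA hyN, (mem_nbrsIn.1 hyN).2, hxS, hyS⟩

open scoped Classical in
variable (G a) in
lemma unseen_succ (k : ℕ) :
    unseen G a (k + 1) = unseen G a k \ nbrsIn G (a k) (unseen G a k) := by
  ext v
  simp only [mem_unseen, Finset.mem_sdiff, mem_nbrsIn, Nat.forall_lt_succ_right]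
  tauto

variable (G) in
lemma exists_seq_unseen {P : ℕ → Finset V → V → Prop} (hP : ∀ k S, ∃ x, P k S x) :
    ∃ a : ℕ → V, ∀ k, P k (unseen G a k) (a k) := by
  classical
  choose f hf using hP
  let S : ℕ → Finset V := Nat.rec Finset.univ fun k T => T \ nbrsIn G (f k T) T
  have hS (k : ℕ) : unseen G (fun j => f j (S j)) k = S k := by
    induction k with
    | zero => exact unseen_zero _ _
    | succ k ih => rw [unseen_succ, ih]
  exact ⟨fun k => f k (S k), fun k => (hS k).symm ▸ hf k (S k)⟩

lemma card_unseen_le (hd₀ : 0 ≤ d) (hd₁ : d ≤ 1) (hL : 0 ≤ L)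
    (hbase : ((unseen G a 1).card : ℝ) ≤ (1 - d) * Fintype.card V + L)
    (hshare : ∀ k, SeesShare G d L (a (k + 1)) (unseen G a (k + 1))) (k : ℕ) :
    ((unseen G a k).card : ℝ) ≤ (1 - d) ^ k * Fintype.card V + L := by
  match k with
  | 0 =>
    simpa [unseen_zero] using hL
  | k + 1 =>
    induction k with
    | zero => simpa using hbase
    | succ k ih =>
      classical
      rw [unseen_succ, pow_succ', mul_assoc]
      exact (hshare k).card_sdiff_nbrsIn_le hd₀ hd₁ hL
        (mul_nonneg (pow_nonneg (sub_nonneg.2 hd₁) _) (Nat.cast_nonneg _)) ih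

open scoped Classical in
lemma exists_seq_seesShare {a₀ : V} (hG : IsLowerUniform G d K) (hd : d ≤ 1)
    (hβ : 0 < β * Fintype.card V) (hβL : K ≤ β * L) (hA : A = nbrsIn G a₀ Finset.univ)
    (hβA : 4 * β * Fintype.card V + 1 ≤ d * A.card) (hAL : 2 * L ≤ A.card) :
    ∃ a : ℕ → V, a 0 = a₀ ∧ G.Adj (a 1) (a 2) ∧
      ∀ k, a (k + 1) ∈ A ∧ SeesShare G d L (a (k + 1)) (unseen G a (k + 1)) := by
  obtain ⟨a₁, ha₁, a₂, ha₂, hadj, hshare₁, hshare₂⟩ :=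
    exists_adj_seesShare hG hd (disjoint_compl_right (a := A)) hβ hβL hβA hAL
  let P : ℕ → Finset V → V → Prop
    | 0, _, x => x = a₀
    | 1, _, x => x = a₁
    | 2, _, x => x = a₂
    | _ + 3, S, x => x ∈ A ∧ (Disjoint A S → SeesShare G d L x S)
  have hP : ∀ k S, ∃ x, P k S x
    | 0, _ => ⟨a₀, rfl⟩
    | 1, _ => ⟨a₁, rfl⟩
    | 2, _ => ⟨a₂, rfl⟩
    | _ + 3, S => by
      by_cases hAS : Disjoint A S
      · have hdA : d * A.card ≤ A.card := mul_le_of_le_one_left (Nat.cast_nonneg _) hd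
        obtain ⟨x, hx, hshare, -⟩ := exists_seesShare_and_seesShare hG hAS hAS hβ hβL (by linarith)
        exact ⟨x, hx, fun _ => hshare⟩
      · exact ⟨a₁, ha₁, fun h => absurd h hAS⟩
  obtain ⟨a, ha⟩ := exists_seq_unseen G hP
  obtain rfl : a 0 = a₀ := ha 0
  obtain rfl : a 1 = a₁ := ha 1
  obtain rfl : a 2 = a₂ := ha 2
  have hunseen₁ : unseen G a 1 = Aᶜ := by
    rw [unseen_succ, unseen_zero, hA, Finset.compl_eq_univ_sdiff]
  refine ⟨a, rfl, hadj, fun k => ?_⟩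
  match k with
  | 0 => exact ⟨ha₁, hunseen₁ ▸ hshare₁⟩
  | 1 => exact ⟨ha₂, by rwa [unseen_succ, hunseen₁]⟩
  | k + 2 =>
    refine ⟨(ha (k + 3)).1, (ha (k + 3)).2 (Finset.disjoint_left.2 fun v hvA hv => ?_)⟩
    exact mem_unseen.1 hv 0 (by omega) (mem_nbrsIn.1 (hA ▸ hvA)).2

lemma exists_centres (hG : IsLowerUniform G d K) (hd₀ : 0 < d) (hd₁ : d ≤ 1) (hK : 1 ≤ K)
    (hn : 64 * K / d ^ 3 ≤ Fintype.card V) :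
    ∃ a : ℕ → V, (∀ k, G.Adj (a 0) (a (k + 1))) ∧ G.Adj (a 1) (a 2) ∧
      ∀ k, ((unseen G a k).card : ℝ) ≤ (1 - d) ^ k * Fintype.card V + 16 * K / d ^ 2 := by
  classical
  set n := (Fintype.card V : ℝ)
  set L := 16 * K / d ^ 2
  have hd₂ : d ^ 2 ≤ 1 := pow_le_one₀ hd₀.le hd₁
  have hn' : 64 * K ≤ d ^ 2 * (d * n) := by
    have := (div_le_iff₀ (pow_pos hd₀ 3)).1 hn
    linarith
  have hLd : L * d ^ 2 = 16 * K := div_mul_cancel₀ _ (pow_pos hd₀ 2).ne'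
  have hL₀ : 0 ≤ L := by positivity
  have hLK : 16 * K ≤ L := by nlinarith
  have hLn : 4 * L ≤ d * n := by nlinarith [pow_pos hd₀ 2]
  have hnpos : 0 < n := by nlinarith
  have hdn : d * n ≤ n := mul_le_of_le_one_left hnpos.le hd₁
  obtain ⟨a₀, ha₀⟩ := exists_le_card_nbrsIn_univ hG hd₀.le hK (show 6 * K ≤ n by linarith)
  set A := nbrsIn G a₀ Finset.univ with hA
  have hdK : d * K ≤ K := mul_le_of_le_one_left (by linarith) hd₁
  have hAcard : d * n - 3 * K ≤ A.card := by linarith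
  have hβA : 4 * (d ^ 2 / 16) * n + 1 ≤ d * A.card := by
    have := mul_le_mul_of_nonneg_left hAcard hd₀.le
    nlinarith
  obtain ⟨a, rfl, hadj₁₂, ha⟩ := exists_seq_seesShare hG hd₁
    (show 0 < d ^ 2 / 16 * n by positivity) (show K ≤ d ^ 2 / 16 * L by linarith) hA hβA
    (by linarith)
  refine ⟨a, fun k => (mem_nbrsIn.1 (ha k).1).2, hadj₁₂,
    card_unseen_le hd₀.le hd₁ hL₀ ?_ fun k => (ha k).2⟩
  rw [unseen_succ, unseen_zero, ← hA, ← Finset.compl_eq_univ_sdiff, Finset.card_compl,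
    Nat.cast_sub (Finset.card_le_univ A)]
  linarith

theorem satNum_cycGraph_four_le (hG : IsLowerUniform G d K) (hd₀ : 0 < d) (hd₁ : d ≤ 1)
    (hK : 1 ≤ K) (hn : 64 * K / d ^ 3 ≤ Fintype.card V) {m : ℕ} (hm : 3 ≤ m) :
    (satNum G (cycGraph 4) : ℝ) ≤
      (3 / 2 + (1 - d) ^ 3 * (1 + 1 / d)) * Fintype.card V + m * (16 * K / d ^ 2 + 1) +
        ((1 - d) ^ m * Fintype.card V + (16 * K / d ^ 2 + 1)) ^ 2 := by
  obtain ⟨a, hadj, hadj₁₂, hunseen⟩ := exists_centres hG hd₀ hd₁ hK hn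
  let S := StarSystem.ofCentres G a hm hadj hadj₁₂
  obtain ⟨H, hSH, hH⟩ := exists_isSaturatedIn_ge (G := G) (StarSystem.graph_ofCentres_le (hm := hm)
    (hadj := hadj) (hadj₁₂ := hadj₁₂)) StarSystem.not_containsCopy_graph
  have hupper (i : ℕ) : ((S.upper i).card : ℝ) ≤
      (1 - d) ^ i * Fintype.card V + (16 * K / d ^ 2 + 1) := by
    have : ((S.upper i).card : ℝ) ≤ (unseen G a i).card + 1 :=
      mod_cast card_upper_ofCentres_le hm hadj hadj₁₂ i
    linarith [hunseen i]
  have hcount := StarSystem.ncard_edgeSet_le_of_card_upper_le hH.2.1 hSH (sub_nonneg.2 hd₁)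
    (sub_lt_self 1 hd₀) (by positivity) hupper
  rw [sub_sub_cancel] at hcount
  exact (Nat.cast_le.2 (satNum_le_ncard_edgeSet hH)).trans hcount

end Centres

section Hoeffding

open ProbabilityTheory

lemma measureReal_sum_le_mul_card_le_exp {Ω ι : Type*} [MeasurableSpace Ω] {μ : Measure Ω}
    [IsProbabilityMeasure μ] {X : ι → Ω → ℝ} (hindep : iIndepFun X μ) {s : Finset ι}
    (hmeas : ∀ i ∈ s, AEMeasurable (X i) μ) (hX : ∀ i ∈ s, ∀ᵐ ω ∂μ, X i ω ∈ Set.Icc 0 1)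
    {p d : ℝ} (hmean : ∀ i ∈ s, p ≤ ∫ ω, X i ω ∂μ) (hd : d ≤ p) :
    μ.real {ω | ∑ i ∈ s, X i ω ≤ d * s.card} ≤ exp (-2 * (p - d) ^ 2 * s.card) := by
  let Y (i : ι) (ω : Ω) : ℝ := (∫ ω', X i ω' ∂μ) - X i ω
  have hYindep : iIndepFun Y μ :=
    hindep.comp (fun i x => (∫ ω', X i ω' ∂μ) - x) fun i => measurable_id.const_sub _
  have hYsubG (i) (hi : i ∈ s) : HasSubgaussianMGF (Y i) (1 / 4) μ := by
    convert (hasSubgaussianMGF_of_mem_Icc (hmeas i hi) (hX i hi)).neg using 1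
    · ext ω
      simp [Y]
    · norm_num
  have hsub : {ω | ∑ i ∈ s, X i ω ≤ d * s.card} ⊆ {ω | (p - d) * s.card ≤ ∑ i ∈ s, Y i ω} := by
    intro ω hω
    have hsum := Finset.card_nsmul_le_sum s _ p hmean
    simp only [Set.mem_ofPred_eq, Y, Finset.sum_sub_distrib, nsmul_eq_mul] at hω hsum ⊢
    linarith
  have hε : 0 ≤ (p - d) * s.card := mul_nonneg (sub_nonneg.2 hd) (Nat.cast_nonneg _)
  refine (measureReal_mono hsub).trans
    ((HasSubgaussianMGF.measure_sum_ge_le_of_iIndepFun hYindep hYsubG hε).trans_eq ?_)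
  obtain rfl | hs := s.eq_empty_or_nonempty
  · simp
  · have : (s.card : ℝ) ≠ 0 := mod_cast hs.card_pos.ne'
    congr 1
    simp only [Finset.sum_const, nsmul_eq_mul, NNReal.coe_mul]
    push_cast
    field_simp
    ring

end Hoeffding

section RandomGraph

open ProbabilityTheory

instance (n : ℕ) (p : ℝ) : IsProbabilityMeasure (erMeasure n p) := by
  unfold erMeasure
  infer_instance

variable {n : ℕ} {p d : ℝ}

lemma graphOf_adj {ω : EdgeType n → Bool} {v w : Fin n} (h : ¬ s(v, w).IsDiag) :
    (graphOf ω).Adj v w ↔ ω ⟨s(v, w), h⟩ = true := by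
  have hvw : v ≠ w := by simpa using h
  simp [graphOf, hvw]

/-- The indicator that the edge `e` is present, as a real random variable. -/
def edgeIndicator (e : EdgeType n) (ω : EdgeType n → Bool) : ℝ := cond (ω e) 1 0

lemma integral_edgeIndicator (hp₀ : 0 ≤ p) (hp₁ : p ≤ 1) (e : EdgeType n) :
    ∫ ω, edgeIndicator e ω ∂erMeasure n p = p := by
  unfold erMeasure edgeIndicator
  refine (integral_comp_eval (X := fun _ => Bool) (i := e) (f := fun b => cond b (1 : ℝ) 0)
    (by fun_prop)).trans ?_
  rw [PMF.integral_eq_sum]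
  simp [PMF.bernoulli_apply, hp₀, hp₁]

variable (n p) in
lemma iIndepFun_edgeIndicator : iIndepFun (edgeIndicator (n := n)) (erMeasure n p) :=
  iIndepFun_pi fun _ => (measurable_of_finite fun b : Bool => cond b (1 : ℝ) 0).aemeasurable

open scoped Classical in
lemma measureReal_card_interedges_le (hp₀ : 0 ≤ p) (hp₁ : p ≤ 1) (hd : d ≤ p)
    {X U : Finset (Fin n)} (hXU : Disjoint X U) :
    (erMeasure n p).real
        {ω | (((graphOf ω).interedges X U).card : ℝ) ≤ d * (X.card * U.card)} ≤
      exp (-2 * (p - d) ^ 2 * (X.card * U.card)) := by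
  have hdiag (z : ↥(X ×ˢ U)) : ¬ s(z.1.1, z.1.2).IsDiag := by
    have hz := Finset.mem_product.1 z.2
    exact Finset.disjoint_iff_ne.1 hXU _ hz.1 _ hz.2
  let edge (z : ↥(X ×ˢ U)) : EdgeType n := ⟨s(z.1.1, z.1.2), hdiag z⟩
  have hedge : Function.Injective edge := by
    rintro ⟨⟨x, u⟩, hz⟩ ⟨⟨x', u'⟩, hz'⟩ heq
    have hx := Finset.mem_product.1 hz
    have hx' := Finset.mem_product.1 hz'
    have := Finset.disjoint_left.1 hXU
    simp only [edge, Subtype.mk.injEq, Sym2.eq_iff] at heq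
    grind
  have hcard (ω : EdgeType n → Bool) :
      (((graphOf ω).interedges X U).card : ℝ) = ∑ z, edgeIndicator (edge z) ω := by
    rw [SimpleGraph.interedges_def, Finset.card_filter, ← Finset.sum_coe_sort]
    push_cast
    refine Finset.sum_congr rfl fun z _ => ?_
    simp only [graphOf_adj (hdiag z), edgeIndicator, edge]
    split_ifs with h <;> simp [h]
  have hbound := measureReal_sum_le_mul_card_le_exp (s := Finset.univ) (d := d)
    ((iIndepFun_edgeIndicator n p).precomp hedge)
    (fun _ _ => (measurable_of_finite _).aemeasurable)
    (fun z _ => ae_of_all _ fun ω => by cases h : ω (edge z) <;> simp [edgeIndicator, h])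
    (fun z _ => (integral_edgeIndicator hp₀ hp₁ (edge z)).ge) hd
  simpa [hcard] using hbound

open scoped Classical in
lemma exists_card_interedges_le {V : Type*} [Fintype V] {G : SimpleGraph V} {K : ℝ}
    (h : ¬ IsLowerUniform G d K) :
    ∃ X U : Finset V, Disjoint X U ∧ K * Fintype.card V ≤ X.card * U.card ∧
      ((G.interedges X U).card : ℝ) ≤ d * (X.card * U.card) := by
  simp only [IsLowerUniform, not_forall, not_exists, not_and, not_le] at h
  obtain ⟨X, U, hXU, hlarge, hfew⟩ := h
  refine ⟨X, U, hXU, hlarge, ?_⟩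
  calc ((G.interedges X U).card : ℝ) = ∑ x ∈ X, ((nbrsIn G x U).card : ℝ) := by
        simp only [SimpleGraph.interedges_def, nbrsIn, Finset.natCast_card_filter,
          Finset.sum_product]
    _ ≤ ∑ _ ∈ X, d * U.card := Finset.sum_le_sum fun x hx => (hfew x hx).le
    _ = d * (X.card * U.card) := by
        rw [Finset.sum_const, nsmul_eq_mul]
        ring

lemma measureReal_not_isLowerUniform_le (hp₀ : 0 ≤ p) (hp₁ : p ≤ 1) (hd : d ≤ p) (K : ℝ) :
    (erMeasure n p).real {ω | ¬ IsLowerUniform (graphOf ω) d K} ≤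
      (4 * exp (-2 * (p - d) ^ 2 * K)) ^ n := by
  classical
  let pairs : Finset (Finset (Fin n) × Finset (Fin n)) :=
    {P | Disjoint P.1 P.2 ∧ K * n ≤ P.1.card * P.2.card}
  have hcover : {ω : EdgeType n → Bool | ¬ IsLowerUniform (graphOf ω) d K} ⊆
      ⋃ P ∈ pairs, {ω | (((graphOf ω).interedges P.1 P.2).card : ℝ) ≤
        d * (P.1.card * P.2.card)} := by
    intro ω hω
    obtain ⟨X, U, hXU, hlarge, hfew⟩ := exists_card_interedges_le hω
    rw [Fintype.card_fin] at hlarge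
    exact Set.mem_biUnion (x := (X, U)) (by simp [pairs, hXU, hlarge]) hfew
  have hpairs : (pairs.card : ℝ) ≤ 4 ^ n := by
    have : pairs.card ≤ 4 ^ n := by
      refine (Finset.card_le_univ _).trans_eq ?_
      rw [Fintype.card_prod, Fintype.card_finset, Fintype.card_fin, ← mul_pow]
      norm_num
    exact_mod_cast this
  calc (erMeasure n p).real {ω | ¬ IsLowerUniform (graphOf ω) d K}
      ≤ ∑ P ∈ pairs, (erMeasure n p).real
          {ω | (((graphOf ω).interedges P.1 P.2).card : ℝ) ≤ d * (P.1.card * P.2.card)} :=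
        (measureReal_mono hcover (measure_ne_top _ _)).trans (measureReal_biUnion_finset_le _ _)
    _ ≤ ∑ P ∈ pairs, exp (-2 * (p - d) ^ 2 * (K * n)) := by
        refine Finset.sum_le_sum fun P hP => ?_
        obtain ⟨hdisj, hlarge⟩ := (Finset.mem_filter.1 hP).2
        refine (measureReal_card_interedges_le hp₀ hp₁ hd hdisj).trans (exp_le_exp.2 ?_)
        exact mul_le_mul_of_nonpos_left hlarge (by nlinarith [sq_nonneg (p - d)])
    _ ≤ 4 ^ n * exp (-2 * (p - d) ^ 2 * (K * n)) := by
        rw [Finset.sum_const, nsmul_eq_mul]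
        gcongr
    _ = (4 * exp (-2 * (p - d) ^ 2 * K)) ^ n := by
        rw [mul_pow, ← exp_nat_mul]
        ring_nf

end RandomGraph

section Asymptotics

lemma tendsto_measure_one_of_tendsto_measure_compl_zero {ι : Type*} {l : Filter ι} {Ω : ι → Type*}
    [∀ i, MeasurableSpace (Ω i)] {μ : ∀ i, Measure (Ω i)} [∀ i, IsProbabilityMeasure (μ i)]
    {s : ∀ i, Set (Ω i)} (h : Tendsto (fun i => μ i (s i)ᶜ) l (nhds 0)) :
    Tendsto (fun i => μ i (s i)) l (nhds 1) := by
  have hsub : Tendsto (fun i => 1 - μ i (s i)ᶜ) l (nhds 1) := by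
    simpa using ENNReal.Tendsto.sub tendsto_const_nhds h (Or.inl ENNReal.one_ne_top)
  refine tendsto_of_tendsto_of_tendsto_of_le_of_le hsub tendsto_const_nhds (fun i => ?_)
    fun i => prob_le_one
  rw [tsub_le_iff_right, ← measure_univ (μ := μ i), ← Set.union_compl_self (s i)]
  exact measure_union_le _ _

/-- For `m = √n` the term `q ^ m * n` vanishes in the limit while `m` stays `o(n)`. -/
lemma eventually_exists_height {q M η : ℝ} (hq₀ : 0 ≤ q) (hq₁ : q < 1) (hM : 0 ≤ M) (hη : 0 < η) :
    ∀ᶠ n : ℕ in atTop, ∃ m : ℕ, 3 ≤ m ∧ m * M + (q ^ m * n + M) ^ 2 ≤ η * n := by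
  have hsmall : ∀ᶠ m : ℕ in atTop, q ^ m * (m + 1) ^ 2 ≤ 1 := by
    have hpow (k : ℕ) := tendsto_pow_const_mul_const_pow_of_lt_one k hq₀ hq₁
    have hlim := ((hpow 2).add ((hpow 1).const_mul 2)).add (hpow 0)
    filter_upwards [hlim.eventually_le_const (by norm_num : _ < (1 : ℝ))] with m hm
    linarith
  have hlarge : ∀ᶠ m : ℕ in atTop, M + (1 + M) ^ 2 ≤ η * m :=
    (tendsto_natCast_atTop_atTop.const_mul_atTop hη).eventually_ge_atTop _
  have hsqrt : Tendsto Nat.sqrt atTop atTop :=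
    tendsto_atTop_atTop.2 fun b => ⟨b * b, fun _ => Nat.le_sqrt.2⟩
  filter_upwards [hsqrt.eventually hsmall, hsqrt.eventually hlarge,
    hsqrt.eventually (eventually_ge_atTop 3)] with n hn₁ hn₂ hn₃
  set m := Nat.sqrt n
  have hmn : (m : ℝ) * m ≤ n := mod_cast Nat.sqrt_le n
  have hnm : (n : ℝ) ≤ (m + 1) ^ 2 := mod_cast (Nat.lt_succ_sqrt' n).le
  have hm : (3 : ℝ) ≤ m := mod_cast hn₃
  refine ⟨m, hn₃, ?_⟩
  have htop : q ^ m * n ≤ 1 := le_trans (by gcongr) hn₁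
  calc m * M + (q ^ m * n + M) ^ 2 ≤ m * M + (1 + M) ^ 2 := by gcongr
    _ ≤ m * (M + (1 + M) ^ 2) := by nlinarith [sq_nonneg (1 + M)]
    _ ≤ m * (η * m) := by gcongr
    _ ≤ η * n := by nlinarith

lemma exists_tendsto_erMeasure_not_isLowerUniform {p d : ℝ} (hp₀ : 0 ≤ p) (hp₁ : p ≤ 1)
    (hd : d < p) : ∃ K ≥ 1, Tendsto
      (fun n => erMeasure n p {ω | ¬ IsLowerUniform (graphOf ω) d K}) atTop (nhds 0) := by
  have hlim : Tendsto (fun K : ℝ => 4 * exp (-2 * (p - d) ^ 2 * K)) atTop (nhds (4 * 0)) := by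
    refine (tendsto_exp_atBot.comp ?_).const_mul 4
    exact tendsto_id.const_mul_atTop_of_neg (by nlinarith)
  obtain ⟨K, hbase, hK⟩ := ((hlim.eventually_lt_const (by norm_num : _ < (1 : ℝ))).and
    (eventually_ge_atTop 1)).exists
  refine ⟨K, hK, ?_⟩
  rw [← ENNReal.tendsto_toReal_iff (fun _ => measure_ne_top _ _) ENNReal.zero_ne_top]
  exact squeeze_zero (fun _ => ENNReal.toReal_nonneg)
    (fun n => measureReal_not_isLowerUniform_le hp₀ hp₁ hd.le K)
    (tendsto_pow_atTop_nhds_zero_of_lt_one (by positivity) hbase)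

lemma eventually_satNum_cycGraph_four_le {d K c : ℝ} (hd₀ : 0 < d) (hd₁ : d ≤ 1) (hK : 1 ≤ K)
    (hc : 3 / 2 + (1 - d) ^ 3 * (1 + 1 / d) < c) :
    ∀ᶠ n : ℕ in atTop, ∀ G : SimpleGraph (Fin n), IsLowerUniform G d K →
      (satNum G (cycGraph 4) : ℝ) ≤ c * n := by
  have hheight := eventually_exists_height (q := 1 - d) (M := 16 * K / d ^ 2 + 1)
    (sub_nonneg.2 hd₁) (sub_lt_self 1 hd₀) (by positivity) (sub_pos.2 hc)
  filter_upwards [hheight,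
    tendsto_natCast_atTop_atTop.eventually_ge_atTop (64 * K / d ^ 3)] with n ⟨m, hm, hmn⟩ hn G hG
  have := satNum_cycGraph_four_le hG hd₀ hd₁ hK (by simpa using hn) hm
  rw [Fintype.card_fin] at this
  linarith

end Asymptotics

theorem c4_saturation_upper_half_general (p : ℝ) (hp₀ : 0 < p) (hp₁ : p ≤ 1) (c : ℝ)
    (hc : 3 / 2 + (1 - p) ^ 3 * (1 + 1 / p) < c) :
    Tendsto (fun n : ℕ =>
      erMeasure n p {ω | (satNum (graphOf ω) (cycGraph 4) : ℝ) ≤ c * n}) atTop (nhds 1) := by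
  have hcont : ContinuousAt (fun d : ℝ => 3 / 2 + (1 - d) ^ 3 * (1 + 1 / d)) p := by
    fun_prop (disch := exact hp₀.ne')
  obtain ⟨d, hdc, hd₀, hdp⟩ := ((hcont.eventually_lt_const hc).filter_mono nhdsWithin_le_nhds).and
    (Ioo_mem_nhdsLT hp₀) |>.exists
  obtain ⟨K, hK, hlim⟩ := exists_tendsto_erMeasure_not_isLowerUniform hp₀.le hp₁ hdp
  refine tendsto_measure_one_of_tendsto_measure_compl_zero
    (tendsto_of_tendsto_of_tendsto_of_le_of_le' tendsto_const_nhds hlim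
      (Eventually.of_forall fun _ => zero_le) ?_)
  filter_upwards [eventually_satNum_cycGraph_four_le hd₀ (hdp.le.trans hp₁) hK hdc] with n hn
  exact measure_mono fun ω hω hG => hω (hn _ hG)

/-- Whp `sat(G(n,1/2), C_4) ≤ (27/14)·n·(1+o(1))`. -/
theorem c4_saturation_upper_half (ε : ℝ) (hε : 0 < ε) :
    Tendsto (fun n : ℕ =>
      erMeasure n (1 / 2) {ω |
        (satNum (graphOf ω) (cycGraph 4) : ℝ) ≤ (27 / 14) * n * (1 + ε)})
      atTop (nhds 1) := by
  simpa only [mul_right_comm] using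
    c4_saturation_upper_half_general (1 / 2) (by norm_num) (by norm_num) (27 / 14 * (1 + ε))
      (by linarith)
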